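/- Let H = {rrr, rrb} (the patterns: a monochromatic red triangle, and a triangle with two red edges and one blue edge). Then there exist constants C1, C2 > 0 and an integer n0 such that for all n ≥ n0, C1·√(n·log n) ≤ h_2(n, H) ≤ C2·√n·(log n)^{3/2}, where log denotes the base-2 logarithm. -/

import Mathlib

/-- The three edge colors: red, blue, yellow. -/
inductive Col : Type
  | r | b | y
  deriving DecidableEq

/-- A (symmetric) 3-edge-coloring of the complete graph `K_n` on vertex set `Fin n`. -/
structure Coloring (n : ℕ) where
  col : Fin n → Fin n → Col
  symm : ∀ i j, col i j = col j i

/-- The pattern (multiset of edge colors) of the triangle on vertices `u, v, w`. -/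
def triPattern {n : ℕ} (c : Coloring n) (u v w : Fin n) : Multiset Col :=
  {c.col u v, c.col v w, c.col u w}

/-- The coloring `c` contains the pattern `P`: some triangle has color multiset `P`. -/
def Contains {n : ℕ} (c : Coloring n) (P : Multiset Col) : Prop :=
  ∃ u v w : Fin n, u ≠ v ∧ v ≠ w ∧ u ≠ w ∧ triPattern c u v w = P

/-- The coloring `c` avoids every pattern in the family `H`. -/
def Avoids {n : ℕ} (c : Coloring n) (H : Set (Multiset Col)) : Prop :=
  ∀ P ∈ H, ¬ Contains c P

/-- A vertex set `S` is two-colored under `c`: the edges inside `S` use at most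
two of the three colors, i.e. some color is missing on the edges inside `S`. -/
def TwoColored {n : ℕ} (c : Coloring n) (S : Finset (Fin n)) : Prop :=
  ∃ x : Col, ∀ i ∈ S, ∀ j ∈ S, i ≠ j → c.col i j ≠ x

/-- `h2 c` is the maximum size of a vertex set whose induced edges use at most
two of the three colors. -/
noncomputable def h2 {n : ℕ} (c : Coloring n) : ℕ :=
  sSup {k | ∃ S : Finset (Fin n), TwoColored c S ∧ S.card = k}

/-- `h2n n H = min { h2 c : c a 3-edge-coloring of K_n avoiding all patterns in H }`. -/
noncomputable def h2n (n : ℕ) (H : Set (Multiset Col)) : ℕ :=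
  sInf {m | ∃ c : Coloring n, Avoids c H ∧ h2 c = m}

/-- Pattern abbreviations. -/
def Prrr : Multiset Col := {Col.r, Col.r, Col.r}
def Pbbb : Multiset Col := {Col.b, Col.b, Col.b}
def Pyyy : Multiset Col := {Col.y, Col.y, Col.y}
def Prrb : Multiset Col := {Col.r, Col.r, Col.b}
def Prry : Multiset Col := {Col.r, Col.r, Col.y}
def Pbbr : Multiset Col := {Col.b, Col.b, Col.r}
def Pbby : Multiset Col := {Col.b, Col.b, Col.y}
def Pyyr : Multiset Col := {Col.y, Col.y, Col.r}
def Pyyb : Multiset Col := {Col.y, Col.y, Col.b}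
def Prby : Multiset Col := {Col.r, Col.b, Col.y}

/-
Lower bound. In a coloring avoiding `rrr` and `rrb` the red graph is triangle-free. Its
neighborhoods and its independent sets are two-colored, so all its degrees and its independence
number are at most `h2`, and Shearer's argument yields an independent set of size of order
`(n / d) * log d` in a triangle-free graph of maximum degree `d`.

Upper bound. Let `G` be a random graph of density of order `1 / √n` and `R ≤ G` a maximal
triangle-free subgraph. The edges of `R` are red, pairs with a common `R`-neighbor are yellow, and
the remaining pairs are blue or yellow at random. Let `S` have size of order `√n * log n`. Many
pairs in `S` are neither edges of `G` nor joined by a path of length two. Hence blue or yellow is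
missing in `S` with a probability small enough for a union bound over all `S`. The same holds for
the event that no pair in `S` without a common `G`-neighbor outside `S` is an edge of `G`, as the
set of these pairs is independent of the edges of `G` inside `S`. Otherwise red occurs in `S`: by
maximality such an edge of `G` lies in `R` or has a common `R`-neighbor, which then belongs to
`S`.
-/

open Finset

section IndependentSets

lemma isIndepSet_iff_forall_not_adj {V : Type*} {G : SimpleGraph V} {S : Set V} :
    G.IsIndepSet S ↔ ∀ a ∈ S, ∀ b ∈ S, ¬ G.Adj a b :=
  ⟨fun h _ ha _ hb hab => h ha hb hab.ne hab, fun h _ ha _ hb _ => h _ ha _ hb⟩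

lemma sum_card_filter_adj {V : Type*} [Fintype V] (G : SimpleGraph V) [DecidableRel G.Adj]
    (W : Finset V) : ∑ v, #{w ∈ W | G.Adj v w} = ∑ w ∈ W, G.degree w := by
  simp only [SimpleGraph.degree, SimpleGraph.neighborFinset_eq_filter, card_filter]
  rw [sum_comm]
  simp only [G.adj_comm]

variable {V : Type*} [Fintype V] [DecidableEq V] (G : SimpleGraph V) [DecidableRel G.Adj]

/-- The closed neighborhood `N[v]` of a vertex. -/
def closedNeighborFinset (v : V) : Finset V := insert v (G.neighborFinset v)

/-- The neighbors of `v` without neighbors in `W`: each of them can be added to an independent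
set `W`. -/
def freeNeighborFinset (v : V) (W : Finset V) : Finset V :=
  {u ∈ G.neighborFinset v | ∀ w ∈ W, ¬ G.Adj w u}

/-- The weight with which `v` is represented in an independent set `W` in Shearer's averaging
argument: the number of neighbors of `v` in `W`, plus `d` if `v` itself lies in `W`. -/
def shearerWeight (d : ℕ) (v : V) (W : Finset V) : ℕ :=
  (if v ∈ W then d else 0) + #(G.neighborFinset v ∩ W)

variable {G} {v : V} {W W₀ Y : Finset V} {d l : ℕ}

lemma freeNeighborFinset_subset : freeNeighborFinset G v W ⊆ G.neighborFinset v :=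
  filter_subset _ _

lemma freeNeighborFinset_subset_closedNeighborFinset :
    freeNeighborFinset G v W ⊆ closedNeighborFinset G v :=
  freeNeighborFinset_subset.trans (subset_insert _ _)

lemma mem_closedNeighborFinset_self (v : V) : v ∈ closedNeighborFinset G v :=
  mem_insert_self _ _

lemma disjoint_closedNeighborFinset :
    Disjoint W (closedNeighborFinset G v) ↔ v ∉ W ∧ ∀ w ∈ W, ¬ G.Adj v w := by
  rw [closedNeighborFinset, disjoint_insert_right, disjoint_left]
  simp only [SimpleGraph.mem_neighborFinset]

lemma isIndepSet_insert_of_disjoint (hW : G.IsIndepSet W)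
    (hv : Disjoint W (closedNeighborFinset G v)) : G.IsIndepSet (insert v W : Finset V) := by
  rw [coe_insert]
  refine hW.insert fun w hw _ => ?_
  have hvw := (disjoint_closedNeighborFinset.1 hv).2 w hw
  exact ⟨hvw, fun h => hvw h.symm⟩

lemma isIndepSet_union_of_subset_freeNeighborFinset (hG : G.CliqueFree 3) (hW : G.IsIndepSet W)
    (hY : Y ⊆ freeNeighborFinset G v W) : G.IsIndepSet (W ∪ Y : Finset V) := by
  have hYN : G.IsIndepSet (Y : Set V) :=
    (G.isIndepSet_neighborSet_of_triangleFree hG v).mono fun u hu => by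
      simpa using freeNeighborFinset_subset (hY hu)
  have hWY : ∀ w ∈ W, ∀ u ∈ Y, ¬ G.Adj w u := fun w hw u hu => (mem_filter.1 (hY hu)).2 w hw
  rw [isIndepSet_iff_forall_not_adj] at hW hYN ⊢
  simp only [mem_coe, mem_union]
  rintro a (ha | ha) b (hb | hb)
  · exact hW a ha b hb
  · exact hWY a ha b hb
  · exact fun h => hWY b hb a ha h.symm
  · exact hYN a ha b hb

lemma insert_sdiff_closedNeighborFinset (hv : Disjoint W₀ (closedNeighborFinset G v)) :
    insert v W₀ \ closedNeighborFinset G v = W₀ := by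
  rw [insert_sdiff_of_mem _ (mem_closedNeighborFinset_self v), sdiff_eq_self_of_disjoint hv]

lemma union_sdiff_closedNeighborFinset (hv : Disjoint W₀ (closedNeighborFinset G v))
    (hY : Y ⊆ freeNeighborFinset G v W₀) : (W₀ ∪ Y) \ closedNeighborFinset G v = W₀ := by
  rw [union_sdiff_distrib, sdiff_eq_self_of_disjoint hv,
    sdiff_eq_empty_iff_subset.2 (hY.trans freeNeighborFinset_subset_closedNeighborFinset),
    union_empty]

lemma eq_insert_sdiff_of_mem (hW : G.IsIndepSet W) (hv : v ∈ W) :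
    W = insert v (W \ closedNeighborFinset G v) := by
  have hvW : ∀ w ∈ W, ¬ G.Adj v w := isIndepSet_iff_forall_not_adj.1 hW v hv
  ext u
  simp only [closedNeighborFinset, mem_insert, mem_sdiff, SimpleGraph.mem_neighborFinset]
  grind

lemma inter_neighborFinset_subset_freeNeighborFinset (hW : G.IsIndepSet W) :
    W ∩ G.neighborFinset v ⊆ freeNeighborFinset G v (W \ closedNeighborFinset G v) := fun u hu =>
  have hu := mem_inter.1 hu
  mem_filter.2 ⟨hu.2, fun w hw =>
    isIndepSet_iff_forall_not_adj.1 hW w (mem_sdiff.1 hw).1 u hu.1⟩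

lemma sdiff_union_inter_neighborFinset (hv : v ∉ W) :
    W \ closedNeighborFinset G v ∪ W ∩ G.neighborFinset v = W := by
  rw [closedNeighborFinset, sdiff_insert, erase_eq_of_notMem fun h => hv (mem_sdiff.1 h).1,
    sdiff_union_inter]

variable (G) in
/-- The family of all independent sets of `G`. -/
def indepSets : Finset (Finset V) := {W | G.IsIndepSet W}

lemma mem_indepSets : W ∈ indepSets G ↔ G.IsIndepSet W := mem_filter_univ W

variable (G v W₀) in
/-- The independent sets `W` with `W \ N[v] = W₀`. -/
def indepFiber : Finset (Finset V) := {W ∈ indepSets G | W \ closedNeighborFinset G v = W₀}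

lemma indepFiber_eq (hG : G.CliqueFree 3) (hW₀ : G.IsIndepSet W₀)
    (hv : Disjoint W₀ (closedNeighborFinset G v)) :
    indepFiber G v W₀ =
      insert (insert v W₀) ((freeNeighborFinset G v W₀).powerset.image (W₀ ∪ ·)) := by
  ext W
  simp only [indepFiber, mem_filter, mem_indepSets, mem_insert, mem_image, mem_powerset]
  constructor
  · rintro ⟨hW, rfl⟩
    by_cases hvW : v ∈ W
    · exact .inl (eq_insert_sdiff_of_mem hW hvW)
    · exact .inr ⟨_, inter_neighborFinset_subset_freeNeighborFinset hW,
        sdiff_union_inter_neighborFinset hvW⟩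
  · rintro (rfl | ⟨Y, hY, rfl⟩)
    · exact ⟨isIndepSet_insert_of_disjoint hW₀ hv, insert_sdiff_closedNeighborFinset hv⟩
    · exact ⟨isIndepSet_union_of_subset_freeNeighborFinset hG hW₀ hY,
        union_sdiff_closedNeighborFinset hv hY⟩

lemma sum_indepFiber (hG : G.CliqueFree 3) (hW₀ : G.IsIndepSet W₀)
    (hv : Disjoint W₀ (closedNeighborFinset G v)) (g : Finset V → ℕ) :
    ∑ W ∈ indepFiber G v W₀, g W =
      g (insert v W₀) + ∑ Y ∈ (freeNeighborFinset G v W₀).powerset, g (W₀ ∪ Y) := by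
  have hvW₀ : v ∉ W₀ := (disjoint_closedNeighborFinset.1 hv).1
  have hdisj : ∀ Y ∈ (freeNeighborFinset G v W₀).powerset, Disjoint W₀ Y := fun Y hY =>
    hv.mono_right ((mem_powerset.1 hY).trans freeNeighborFinset_subset_closedNeighborFinset)
  rw [indepFiber_eq hG hW₀ hv, sum_insert, sum_image]
  · intro Y hY Z hZ h
    rw [← union_sdiff_cancel_left (hdisj Y hY), ← union_sdiff_cancel_left (hdisj Z hZ)]
    exact congrArg (· \ W₀) h
  · simp only [mem_image, mem_powerset, not_exists, not_and]
    intro Y hY h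
    have hvY : v ∈ Y := (mem_union.1 (h ▸ mem_insert_self v W₀)).resolve_left hvW₀
    simpa using freeNeighborFinset_subset (hY hvY)

lemma two_mul_sum_card_powerset {α : Type*} (X : Finset α) :
    2 * ∑ Y ∈ X.powerset, #Y = #X * 2 ^ #X := by
  classical
  have hcompl : ∑ Y ∈ X.powerset, #(X \ Y) = ∑ Y ∈ X.powerset, #Y :=
    sum_nbij' (X \ ·) (X \ ·) (by simp) (by simp)
      (fun _ hY => Finset.sdiff_sdiff_eq_self (mem_powerset.1 hY))
      (fun _ hY => Finset.sdiff_sdiff_eq_self (mem_powerset.1 hY)) (fun _ _ => rfl)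
  calc 2 * ∑ Y ∈ X.powerset, #Y = ∑ Y ∈ X.powerset, (#(X \ Y) + #Y) := by
        rw [sum_add_distrib, hcompl, two_mul]
    _ = ∑ _ ∈ X.powerset, #X :=
        sum_congr rfl fun Y hY => card_sdiff_add_card_eq_card (mem_powerset.1 hY)
    _ = #X * 2 ^ #X := by rw [sum_const, card_powerset, smul_eq_mul, mul_comm]

lemma two_mul_mul_one_add_two_pow_le (hd : l * 4 ^ l ≤ d) (x : ℕ) :
    2 * (l * (1 + 2 ^ x)) ≤ 2 * d + x * 2 ^ x := by
  have h4 : 1 ≤ 4 ^ l := Nat.one_le_pow _ _ (by norm_num)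
  rcases Nat.lt_or_ge x (2 * l) with hx | hx
  · have h1 : 2 ^ x * 2 ≤ 4 ^ l := by
      rw [← pow_succ, show 4 = 2 ^ 2 from rfl, ← pow_mul]
      exact Nat.pow_le_pow_right (by norm_num) hx
    have h2 : 1 ≤ 2 ^ x := Nat.one_le_two_pow
    nlinarith
  · have : 2 * l * 2 ^ x ≤ x * 2 ^ x := Nat.mul_le_mul_right _ hx
    nlinarith

lemma mul_card_indepFiber_le (hG : G.CliqueFree 3) (hW₀ : G.IsIndepSet W₀)
    (hv : Disjoint W₀ (closedNeighborFinset G v)) (hd : l * 4 ^ l ≤ d) :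
    l * #(indepFiber G v W₀) ≤ ∑ W ∈ indepFiber G v W₀, shearerWeight G d v W := by
  set X := freeNeighborFinset G v W₀
  have hcard : #(indepFiber G v W₀) = 1 + 2 ^ #X := by
    rw [card_eq_sum_ones, sum_indepFiber hG hW₀ hv, ← card_eq_sum_ones, card_powerset]
  have hinsert : d ≤ shearerWeight G d v (insert v W₀) := by simp [shearerWeight]
  have hunion : ∀ Y ∈ X.powerset, #Y ≤ shearerWeight G d v (W₀ ∪ Y) := fun Y hY =>
    (card_le_card (subset_inter ((mem_powerset.1 hY).trans freeNeighborFinset_subset)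
      subset_union_right)).trans (Nat.le_add_left _ _)
  have hsum := add_le_add hinsert (sum_le_sum hunion)
  rw [← sum_indepFiber hG hW₀ hv] at hsum
  rw [hcard]
  have hX := two_mul_sum_card_powerset X
  have hl := two_mul_mul_one_add_two_pow_le hd #X
  omega

lemma mul_card_indepSets_le (hG : G.CliqueFree 3) (hd : l * 4 ^ l ≤ d) (v : V) :
    l * #(indepSets G) ≤ ∑ W ∈ indepSets G, shearerWeight G d v W := by
  have hmaps : ∀ W ∈ indepSets G, W \ closedNeighborFinset G v ∈
      (indepSets G).image (· \ closedNeighborFinset G v) := fun W hW => mem_image_of_mem _ hW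
  rw [← sum_fiberwise_of_maps_to hmaps, card_eq_sum_card_fiberwise hmaps, mul_sum]
  refine sum_le_sum fun W₀ hW₀ => ?_
  obtain ⟨W, hW, rfl⟩ := mem_image.1 hW₀
  have hindep : G.IsIndepSet (W \ closedNeighborFinset G v : Finset V) :=
    Set.Pairwise.mono (coe_subset.2 sdiff_subset) (mem_indepSets.1 hW)
  exact mul_card_indepFiber_le hG hindep sdiff_disjoint hd

lemma sum_shearerWeight_le (hdeg : ∀ v, G.degree v ≤ d) (W : Finset V) :
    ∑ v, shearerWeight G d v W ≤ 2 * d * #W := by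
  have hmem : ∑ v, (if v ∈ W then d else 0) = #W * d := by
    rw [sum_ite_mem, univ_inter, sum_const, smul_eq_mul]
  have hadj : ∑ v, #(G.neighborFinset v ∩ W) = ∑ w ∈ W, G.degree w := by
    simp only [SimpleGraph.neighborFinset_eq_filter, filter_inter, univ_inter,
      sum_card_filter_adj]
  calc ∑ v, shearerWeight G d v W = #W * d + ∑ w ∈ W, G.degree w := by
        simp only [shearerWeight, sum_add_distrib, hmem, hadj]
    _ ≤ #W * d + #W * d := by
        gcongr
        exact sum_le_card_nsmul _ _ _ fun w _ => hdeg w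
    _ = 2 * d * #W := by ring

end IndependentSets

/-- Shearer's argument: choose an independent set uniformly at random and average over `v`. -/
theorem card_mul_le_two_mul_mul_indepNum {V : Type*} [Fintype V] {G : SimpleGraph V}
    [DecidableRel G.Adj] {d l : ℕ} (hG : G.CliqueFree 3)
    (hdeg : ∀ v, G.degree v ≤ d) (hd : l * 4 ^ l ≤ d) :
    Fintype.card V * l ≤ 2 * d * G.indepNum := by
  classical
  have hne : (indepSets G).Nonempty := ⟨∅, by simp [mem_indepSets, SimpleGraph.IsIndepSet]⟩
  have hsum : ∑ _ ∈ indepSets G, Fintype.card V * l ≤ ∑ W ∈ indepSets G, 2 * d * #W :=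
    calc ∑ _ ∈ indepSets G, Fintype.card V * l = ∑ _ : V, l * #(indepSets G) := by
          simp only [sum_const, smul_eq_mul, card_univ]; ring
      _ ≤ ∑ v, ∑ W ∈ indepSets G, shearerWeight G d v W :=
          sum_le_sum fun v _ => mul_card_indepSets_le hG hd v
      _ = ∑ W ∈ indepSets G, ∑ v, shearerWeight G d v W := sum_comm
      _ ≤ ∑ W ∈ indepSets G, 2 * d * #W := sum_le_sum fun W _ => sum_shearerWeight_le hdeg W
  obtain ⟨W, hW, hle⟩ := exists_le_of_sum_le hne hsum
  have hindep : G.IsIndepSet (W : Set V) := mem_indepSets.1 hW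
  exact hle.trans (Nat.mul_le_mul_left _ hindep.card_le_indepNum)

namespace Coloring

variable {n : ℕ} {c : Coloring n} {S : Finset (Fin n)}

lemma avoids_rrr_rrb_iff : Avoids c {Prrr, Prrb} ↔
    ∀ v u w : Fin n, v ≠ u → v ≠ w → u ≠ w → c.col v u = Col.r → c.col v w = Col.r →
      c.col u w = Col.y := by
  constructor
  · intro h v u w hvu hvw huw hu hw
    have hpat : triPattern c u v w = {Col.r, Col.r, c.col u w} := by
      rw [triPattern, c.symm u v, hu, hw]
    match huw' : c.col u w with
    | .r => exact (h Prrr (by simp) ⟨u, v, w, hvu.symm, hvw, huw, by rw [hpat, huw', Prrr]⟩).elim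
    | .b => exact (h Prrb (by simp) ⟨u, v, w, hvu.symm, hvw, huw, by rw [hpat, huw', Prrb]⟩).elim
    | .y => rfl
  · rintro h P hP ⟨u, v, w, huv, hvw, huw, hpat⟩
    have hu := h u v w huv huw hvw
    have hv := h v u w huv.symm hvw huw
    have hw := h w u v huw.symm hvw.symm huv
    rw [c.symm v u] at hv
    rw [c.symm w u, c.symm w v] at hw
    rw [triPattern] at hpat
    rcases hP with rfl | rfl <;> revert hpat hu hv hw <;>
      cases c.col u v <;> cases c.col v w <;> cases c.col u w <;> decide

lemma card_le_h2 (hS : TwoColored c S) : #S ≤ h2 c :=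
  le_csSup ⟨n, by rintro k ⟨T, -, rfl⟩; simpa using T.card_le_univ⟩ ⟨S, hS, rfl⟩

lemma h2_le_iff {k : ℕ} : h2 c ≤ k ↔ ∀ S, TwoColored c S → #S ≤ k := by
  refine ⟨fun h S hS => (card_le_h2 hS).trans h, fun h => csSup_le' ?_⟩
  rintro _ ⟨S, hS, rfl⟩
  exact h S hS

lemma h2n_le_h2 {H : Set (Multiset Col)} (hc : Avoids c H) : h2n n H ≤ h2 c :=
  Nat.sInf_le ⟨c, hc, rfl⟩

lemma exists_h2_eq_h2n (n : ℕ) :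
    ∃ c : Coloring n, Avoids c {Prrr, Prrb} ∧ h2 c = h2n n {Prrr, Prrb} :=
  Nat.sInf_mem (s := {m | ∃ c : Coloring n, Avoids c {Prrr, Prrb} ∧ h2 c = m})
    ⟨_, ⟨fun _ _ => Col.y, fun _ _ => rfl⟩,
      avoids_rrr_rrb_iff.2 fun _ _ _ _ _ _ _ _ => rfl, rfl⟩

/-- The graph of the red edges of a coloring. -/
def redGraph (c : Coloring n) : SimpleGraph (Fin n) where
  Adj i j := i ≠ j ∧ c.col i j = Col.r
  symm := ⟨fun i j h => ⟨h.1.symm, by rw [c.symm]; exact h.2⟩⟩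

lemma twoColored_of_isIndepSet_redGraph (hS : c.redGraph.IsIndepSet S) : TwoColored c S :=
  ⟨Col.r, fun _ hi _ hj hij hr => hS hi hj hij ⟨hij, hr⟩⟩

lemma indepNum_redGraph_le_h2 : c.redGraph.indepNum ≤ h2 c := by
  obtain ⟨S, hS⟩ := c.redGraph.exists_isNIndepSet_indepNum
  exact hS.card_eq ▸ card_le_h2 (twoColored_of_isIndepSet_redGraph hS.isIndepSet)

lemma redGraph_cliqueFree_three (hc : Avoids c {Prrr, Prrb}) : c.redGraph.CliqueFree 3 := by
  intro T hT
  obtain ⟨u, v, w, huv, huw, hvw, -⟩ := SimpleGraph.is3Clique_iff.1 hT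
  have hy := avoids_rrr_rrb_iff.1 hc u v w huv.1 huw.1 hvw.1 huv.2 huw.2
  exact absurd (hvw.2.symm.trans hy) (by decide)

lemma degree_redGraph_le_h2 [DecidableRel c.redGraph.Adj] (hc : Avoids c {Prrr, Prrb})
    (v : Fin n) : c.redGraph.degree v ≤ h2 c :=
  card_le_h2 <| twoColored_of_isIndepSet_redGraph <| by
    rw [SimpleGraph.coe_neighborFinset]
    exact c.redGraph.isIndepSet_neighborSet_of_triangleFree (redGraph_cliqueFree_three hc) v

open scoped Classical in
lemma le_h2_or_mul_le_two_mul_mul_h2 {l d : ℕ} (hc : Avoids c {Prrr, Prrb})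
    (hd : l * 4 ^ l ≤ d) : d ≤ h2 c ∨ n * l ≤ 2 * d * h2 c := by
  refine or_iff_not_imp_left.2 fun h => ?_
  have hindep := card_mul_le_two_mul_mul_indepNum (redGraph_cliqueFree_three hc)
    (fun v => (degree_redGraph_le_h2 hc v).trans (not_le.1 h).le) hd
  rw [Fintype.card_fin] at hindep
  exact hindep.trans (Nat.mul_le_mul_left _ indepNum_redGraph_le_h2)

end Coloring

section LowerBound

open Real

variable {n : ℕ}

lemma eight_le_logb (hn : 256 ≤ n) : 8 ≤ logb 2 n := by
  have hn' : (256 : ℝ) ≤ n := by exact_mod_cast hn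
  rw [le_logb_iff_rpow_le (by norm_num) (by linarith)]
  exact_mod_cast hn'

lemma floor_mul_four_pow_le_sqrt (hn : 1 ≤ n) :
    ((⌊logb 2 n / 8⌋₊ * 4 ^ ⌊logb 2 n / 8⌋₊ : ℕ) : ℝ) ≤ √n := by
  have hn' : (1 : ℝ) ≤ n := by exact_mod_cast hn
  set l := ⌊logb 2 n / 8⌋₊
  have hl : (l : ℝ) ≤ logb 2 n / 8 :=
    Nat.floor_le (div_nonneg (logb_nonneg (by norm_num) hn') (by norm_num))
  calc ((l * 4 ^ l : ℕ) : ℝ) ≤ ((2 ^ l * 4 ^ l : ℕ) : ℝ) := by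
        gcongr; exact Nat.lt_two_pow_self.le
    _ = (2 : ℝ) ^ (3 * l : ℝ) := by
        rw [← mul_pow, rpow_mul (by norm_num), rpow_natCast]; norm_num
    _ ≤ (2 : ℝ) ^ (logb 2 n * (1 / 2)) := by
        refine rpow_le_rpow_of_exponent_le (by norm_num) ?_
        have : 0 ≤ logb 2 n := logb_nonneg (by norm_num) hn'
        linarith
    _ = √n := by
        rw [rpow_mul (by norm_num), rpow_logb (by norm_num) (by norm_num) (by linarith),
          sqrt_eq_rpow]

theorem sqrt_mul_logb_le_h2n (hn : 256 ≤ n) :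
    1 / 64 * √(n * logb 2 n) ≤ (h2n n {Prrr, Prrb} : ℝ) := by
  obtain ⟨c, hc, hh⟩ := Coloring.exists_h2_eq_h2n n
  rw [← hh]
  have hn' : (256 : ℝ) ≤ n := by exact_mod_cast hn
  have hL := eight_le_logb hn
  set L := logb 2 n
  set l := ⌊L / 8⌋₊
  set q := √(n * L)
  have hqq : q * q = n * L := mul_self_sqrt (by positivity)
  have hnq : √n ≤ q := sqrt_le_sqrt (by nlinarith)
  have hq1 : 1 ≤ q := (one_le_sqrt.2 (by linarith)).trans hnq
  have hlL : L / 16 ≤ l := by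
    have h1 : (1 : ℝ) ≤ l := by exact_mod_cast (Nat.one_le_floor_iff _).2 (by linarith)
    have := Nat.lt_floor_add_one (L / 8)
    linarith
  have hqd : q ≤ ⌈q⌉₊ := Nat.le_ceil q
  have hdq : (⌈q⌉₊ : ℝ) ≤ 2 * q := by
    have := Nat.ceil_lt_add_one (zero_le_one.trans hq1)
    linarith
  have hld : l * 4 ^ l ≤ ⌈q⌉₊ := by
    exact_mod_cast ((floor_mul_four_pow_le_sqrt (by lia)).trans hnq).trans hqd
  rcases Coloring.le_h2_or_mul_le_two_mul_mul_h2 hc hld with h | h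
  · have : (⌈q⌉₊ : ℝ) ≤ h2 c := by exact_mod_cast h
    linarith
  · have hcast : (n : ℝ) * l ≤ 2 * ⌈q⌉₊ * h2 c := by exact_mod_cast h
    have hq : q * (q / 16) ≤ q * (4 * h2 c) :=
      calc q * (q / 16) = n * (L / 16) := by rw [← mul_div_assoc, hqq, mul_div_assoc]
        _ ≤ n * l := by gcongr
        _ ≤ 2 * ⌈q⌉₊ * h2 c := hcast
        _ ≤ 2 * (2 * q) * h2 c := by gcongr
        _ = q * (4 * h2 c) := by ring
    have := le_of_mul_le_mul_left hq (by linarith)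
    linarith

end LowerBound

section RandomFunctions

lemma dens_biUnion_le {ι α : Type*} [Fintype α] [DecidableEq α] {I : Finset ι}
    {B : ι → Finset α} {ε : ℚ≥0} (hB : ∀ i ∈ I, (B i).dens ≤ ε) :
    (I.biUnion B).dens ≤ #I * ε := by
  classical
  induction I using Finset.induction_on with
  | empty => simp
  | insert i I hi ih =>
    rw [biUnion_insert, card_insert_of_notMem hi, Nat.cast_succ, add_one_mul, add_comm]
    exact (dens_union_le _ _).trans (add_le_add (hB i (mem_insert_self _ _))
      (ih fun k hk => hB k (mem_insert_of_mem hk)))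

lemma dens_biUnion_le_half_pow {ι α : Type*} [Fintype α] [DecidableEq α] {I : Finset ι}
    {B : ι → Finset α} {a b : ℕ} (hI : #I ≤ 2 ^ a)
    (hB : ∀ i ∈ I, (B i).dens ≤ (1 / 2) ^ (a + b)) : (I.biUnion B).dens ≤ (1 / 2) ^ b :=
  calc (I.biUnion B).dens ≤ #I * (1 / 2) ^ (a + b) := dens_biUnion_le hB
    _ ≤ 2 ^ a * (1 / 2) ^ (a + b) := by gcongr; exact_mod_cast hI
    _ = (1 / 2) ^ b := by rw [pow_add, ← mul_assoc, ← mul_pow]; norm_num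

lemma piecewise_swap_involutive {E K : Type*} [DecidableEq E] (T : Finset E) :
    Function.Involutive fun p : (E → K) × (E → K) => (T.piecewise p.2 p.1, T.piecewise p.1 p.2) :=
  fun p => by ext e <;> by_cases he : e ∈ T <;> simp [he]

variable {E K : Type*} [Fintype E] [DecidableEq E] [Fintype K]

/-- It suffices to bound the probability of an event conditionally on the values outside `T`:
resampling the values on `T` does not change the distribution. -/
lemma dens_le_of_forall_dens_piecewise_le {P : (E → K) → Prop} [DecidablePred P] (T : Finset E)
    {ε : ℚ≥0} (hP : ∀ f, ({h | P (T.piecewise h f)} : Finset (E → K)).dens ≤ ε) :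
    ({f | P f} : Finset (E → K)).dens ≤ ε := by
  rcases isEmpty_or_nonempty (E → K) with hΩ | hΩ
  · simp [dens]
  have hN : (0 : ℚ≥0) < Fintype.card (E → K) := by exact_mod_cast Fintype.card_pos
  have hswap : ∑ f : E → K, ∑ _h : E → K, (if P f then 1 else 0) =
      ∑ f : E → K, ∑ h : E → K, if P (T.piecewise h f) then 1 else 0 := by
    rw [← Fintype.sum_prod_type', ← Fintype.sum_prod_type']
    exact (Equiv.sum_comp (piecewise_swap_involutive T).toPerm
      fun p : (E → K) × (E → K) => if P p.1 then 1 else 0).symm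
  have hcount : (Fintype.card (E → K) * #{f : E → K | P f} : ℚ≥0) =
      ∑ f : E → K, (#{h : E → K | P (T.piecewise h f)} : ℚ≥0) := by
    simp only [sum_const, card_univ, smul_eq_mul, ← mul_sum, ← card_filter] at hswap
    exact_mod_cast hswap
  refine le_of_mul_le_mul_left (le_of_mul_le_mul_left ?_ hN) hN
  rw [card_mul_dens, hcount, ← nsmul_eq_mul, ← card_univ]
  refine sum_le_card_nsmul _ _ _ fun f _ => ?_
  rw [← card_mul_dens, card_univ]
  gcongr
  exact hP f

lemma dens_piFinset (s : E → Finset K) : (Fintype.piFinset s).dens = ∏ e, (s e).dens := by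
  simp [dens, Fintype.card_piFinset, prod_div_distrib]

variable [DecidableEq K]

lemma dens_compl_singleton_pow_card_le (j : K) :
    ({j}ᶜ : Finset K).dens ^ Fintype.card K ≤ 1 / 2 := by
  have hK : 0 < Fintype.card K := Fintype.card_pos_iff.2 ⟨j⟩
  have hdens : ((({j}ᶜ : Finset K).dens : ℚ≥0) : ℝ) = 1 - 1 / Fintype.card K := by
    rw [nnratCast_dens, card_compl, card_singleton, Nat.cast_sub hK]
    field_simp
    simp
  have hexp : Real.exp (-1) ≤ 1 / 2 := by
    rw [Real.exp_neg, ← one_div]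
    exact one_div_le_one_div_of_le (by norm_num) (by linarith [Real.add_one_le_exp 1])
  have hreal : ((({j}ᶜ : Finset K).dens ^ Fintype.card K : ℚ≥0) : ℝ) ≤ ((1 / 2 : ℚ≥0) : ℝ) := by
    rw [NNRat.cast_pow, hdens]
    push_cast
    exact (Real.one_sub_div_pow_le_exp_neg (by exact_mod_cast hK)).trans hexp
  exact_mod_cast hreal

lemma dens_forall_mem_ne_le {U : Finset E} {w : ℕ} (j : K) (hU : Fintype.card K * w ≤ #U) :
    ({f | ∀ e ∈ U, f e ≠ j} : Finset (E → K)).dens ≤ (1 / 2) ^ w := by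
  have hpi : ({f | ∀ e ∈ U, f e ≠ j} : Finset (E → K)) =
      Fintype.piFinset fun e => if e ∈ U then {j}ᶜ else univ := by
    ext f
    simp only [mem_filter_univ, Fintype.mem_piFinset]
    exact forall_congr' fun e => by by_cases he : e ∈ U <;> simp [he]
  calc ({f | ∀ e ∈ U, f e ≠ j} : Finset (E → K)).dens = ({j}ᶜ : Finset K).dens ^ #U := by
        have : Nonempty K := ⟨j⟩
        simp [hpi, dens_piFinset, apply_ite dens, prod_ite_mem]
    _ ≤ ({j}ᶜ : Finset K).dens ^ (Fintype.card K * w) :=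
        pow_le_pow_of_le_one zero_le dens_le_one hU
    _ ≤ (1 / 2) ^ w := by
        rw [pow_mul]
        exact pow_le_pow_left₀ zero_le (dens_compl_singleton_pow_card_le j) w

lemma sum_two_pow_card_filter_eq (T : Finset E) (j : K) :
    ∑ f : E → K, 2 ^ #{e ∈ T | f e = j} =
      (Fintype.card K + 1) ^ #T * Fintype.card K ^ #Tᶜ := by
  have hcolor : ∀ e ∈ T, ∑ x : K, (if x = j then 2 else 1) = Fintype.card K + 1 := fun e _ => by
    rw [← add_sum_erase _ _ (mem_univ j), if_pos rfl,
      sum_congr rfl fun x hx => if_neg (ne_of_mem_erase hx), ← card_eq_sum_ones,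
      card_erase_of_mem (mem_univ j), card_univ]
    have : 0 < Fintype.card K := Fintype.card_pos_iff.2 ⟨j⟩
    lia
  calc ∑ f : E → K, 2 ^ #{e ∈ T | f e = j}
      = ∑ f : E → K, ∏ e, if e ∈ T then (if f e = j then 2 else 1) else 1 := by
        simp [prod_ite_mem, prod_ite]
    _ = ∏ e, ∑ x : K, if e ∈ T then (if x = j then 2 else 1) else 1 := by
        rw [prod_univ_sum, Fintype.piFinset_univ]
    _ = (Fintype.card K + 1) ^ #T * Fintype.card K ^ #Tᶜ := by
        rw [← prod_mul_prod_compl T]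
        congr 1
        · exact prod_eq_pow_card fun e he => by simpa [he] using hcolor e he
        · exact prod_eq_pow_card fun e he => by simp [mem_compl.1 he]

lemma add_one_pow_self_le (m : ℕ) : (m + 1) ^ m ≤ 4 * m ^ m := by
  rcases m.eq_zero_or_pos with rfl | hm
  · norm_num
  have hm' : (m : ℝ) ≠ 0 := by positivity
  have hexp : (1 + (m : ℝ)⁻¹) ^ m ≤ 4 :=
    Real.one_add_inv_pow_le_exp.trans (by linarith [Real.exp_one_lt_d9])
  have hreal : ((m : ℝ) + 1) ^ m ≤ 4 * (m : ℝ) ^ m :=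
    calc ((m : ℝ) + 1) ^ m = (1 + (m : ℝ)⁻¹) ^ m * (m : ℝ) ^ m := by
          rw [← mul_pow, add_mul, inv_mul_cancel₀ hm', one_mul]
      _ ≤ 4 * (m : ℝ) ^ m := by gcongr
  exact_mod_cast hreal

lemma add_one_pow_le {m a t : ℕ} (ht : t ≤ m * a) : (m + 1) ^ t ≤ 4 ^ a * m ^ t := by
  have hma : (m + 1) ^ (m * a) ≤ 4 ^ a * m ^ (m * a) := by
    rw [pow_mul, pow_mul, ← mul_pow]
    exact Nat.pow_le_pow_left (add_one_pow_self_le m) a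
  rcases m.eq_zero_or_pos with rfl | hm
  · simp_all
  refine le_of_mul_le_mul_right ?_ (Nat.pow_pos (n := m * a - t) hm)
  calc (m + 1) ^ t * m ^ (m * a - t) ≤ (m + 1) ^ t * (m + 1) ^ (m * a - t) := by
        gcongr; exact m.le_succ
    _ ≤ 4 ^ a * m ^ t * m ^ (m * a - t) := by
        rwa [← pow_add, mul_assoc, ← pow_add, Nat.add_sub_cancel' ht]

/-- Markov's inequality for `2 ^ #{e ∈ T | f e = j}`. -/
lemma dens_le_card_filter_le {T : Finset E} {a b : ℕ} (j : K) (hT : #T ≤ Fintype.card K * a) :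
    ({f | 2 * a + b ≤ #{e ∈ T | f e = j}} : Finset (E → K)).dens ≤ (1 / 2) ^ b := by
  set m := Fintype.card K
  set B : Finset (E → K) := {f | 2 * a + b ≤ #{e ∈ T | f e = j}}
  have hmarkov : #B * 2 ^ b * 4 ^ a ≤ Fintype.card (E → K) * 4 ^ a :=
    calc #B * 2 ^ b * 4 ^ a = ∑ _ ∈ B, 2 ^ (2 * a + b) := by
          rw [sum_const, smul_eq_mul, pow_add, pow_mul]; ring
      _ ≤ ∑ f ∈ B, 2 ^ #{e ∈ T | f e = j} := sum_le_sum fun _ hf =>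
          Nat.pow_le_pow_right two_pos (mem_filter.1 hf).2
      _ ≤ ∑ f : E → K, 2 ^ #{e ∈ T | f e = j} := sum_le_sum_of_subset (subset_univ B)
      _ = (m + 1) ^ #T * m ^ #Tᶜ := sum_two_pow_card_filter_eq T j
      _ ≤ 4 ^ a * m ^ #T * m ^ #Tᶜ := Nat.mul_le_mul_right _ (add_one_pow_le hT)
      _ = Fintype.card (E → K) * 4 ^ a := by
          rw [mul_assoc, ← pow_add, card_add_card_compl, Fintype.card_fun, mul_comm]
  have hcard : #B * 2 ^ b ≤ Fintype.card (E → K) := le_of_mul_le_mul_right hmarkov (by positivity)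
  have : Nonempty K := ⟨j⟩
  rw [dens, one_div, inv_pow, div_le_iff₀ (by exact_mod_cast Fintype.card_pos),
    inv_mul_eq_div, le_div_iff₀ (by positivity)]
  exact_mod_cast hcard

lemma dens_forall_mem_ne_of_piecewise_eq_le {T : Finset E} {U : (E → K) → Finset E} {w : ℕ} (j : K)
    (hUT : ∀ f, U f ⊆ T) (hU : ∀ f h, U (T.piecewise h f) = U f) :
    ({f | Fintype.card K * w ≤ #(U f) ∧ ∀ e ∈ U f, f e ≠ j} : Finset (E → K)).dens ≤
      (1 / 2) ^ w := by
  refine dens_le_of_forall_dens_piecewise_le T fun f => ?_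
  by_cases hf : Fintype.card K * w ≤ #(U f)
  · refine (dens_mono fun h hh => ?_).trans (dens_forall_mem_ne_le j hf)
    simp only [mem_filter_univ, hU] at hh ⊢
    exact fun e he => by simpa [hUT f he] using hh.2 e he
  · simp [hU, hf]

lemma exists_notMem_of_dens_lt_one {α : Type*} [Fintype α] [Nonempty α] {B : Finset α}
    (hB : B.dens < 1) : ∃ a, a ∉ B := by
  by_contra! h
  exact hB.ne (dens_eq_one.2 (eq_univ_iff_forall.2 h))

lemma exists_bool_forall_exists_mem_eq {ι E : Type*} [Finite E] {I : Finset ι}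
    {F : ι → Finset E} {a : ℕ} (hI : #I ≤ 2 ^ a) (hF : ∀ i ∈ I, 2 * (a + 2) ≤ #(F i)) :
    ∃ f : E → Bool, ∀ i ∈ I, ∀ j, ∃ e ∈ F i, f e = j := by
  classical
  have := Fintype.ofFinite E
  set B : Finset (E → Bool) :=
    (I ×ˢ univ).biUnion fun p : ι × Bool => {f | ∀ e ∈ F p.1, f e ≠ p.2}
  have hB : B.dens ≤ (1 / 2) ^ 1 := by
    refine dens_biUnion_le_half_pow (a := a + 1) ?_ fun p hp =>
      dens_forall_mem_ne_le p.2 (hF p.1 (mem_product.1 hp).1)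
    rw [card_product, card_univ, Fintype.card_bool, pow_succ]
    exact Nat.mul_le_mul_right 2 hI
  obtain ⟨f, hf⟩ := exists_notMem_of_dens_lt_one (hB.trans_lt (by norm_num))
  refine ⟨f, fun i hi j => ?_⟩
  by_contra! h
  exact hf (mem_biUnion.2 ⟨(i, j), by simp [hi], by simpa using h⟩)

end RandomFunctions

section FreePairs

lemma card_filter_lt_mul_lt {ι : Type*} [Fintype ι] {d : ι → ℕ} {s M : ℕ} (hs : 0 < s)
    (hM : ∀ B : Finset ι, #B = s → ∑ i ∈ B, d i ≤ M) : #{i | M < s * d i} < s := by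
  by_contra! h
  obtain ⟨B, hBH, hB⟩ := exists_subset_card_eq h
  have hlt : ∑ _ ∈ B, M < ∑ i ∈ B, s * d i :=
    sum_lt_sum_of_nonempty (card_pos.1 (hB ▸ hs)) fun i hi => (mem_filter.1 (hBH hi)).2
  rw [sum_const, hB, smul_eq_mul, ← mul_sum] at hlt
  exact (Nat.mul_le_mul_left s (hM B hB)).not_gt hlt

/-- Fewer than `s` indices have `d i > M / s`; their contribution is bounded through `hM`, that of
the others through `hsum`. -/
lemma sum_sq_le_two_mul_mul {ι : Type*} [Fintype ι] {d : ι → ℕ} {s D M : ℕ}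
    (hs : 0 < s) (hcard : s ≤ Fintype.card ι) (hD : ∀ i, d i ≤ D) (hsum : ∑ i, d i ≤ s * D)
    (hM : ∀ B : Finset ι, #B = s → ∑ i ∈ B, d i ≤ M) : ∑ i, d i ^ 2 ≤ 2 * D * M := by
  classical
  set H : Finset ι := {i | M < s * d i}
  have hheavy : ∑ i ∈ H, d i ^ 2 ≤ D * M := by
    obtain ⟨B, hHB, hB⟩ := exists_superset_card_eq (card_filter_lt_mul_lt hs hM).le hcard
    calc ∑ i ∈ H, d i ^ 2 ≤ ∑ i ∈ H, D * d i := sum_le_sum fun i _ => by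
          rw [sq]; exact Nat.mul_le_mul_right _ (hD i)
      _ = D * ∑ i ∈ H, d i := (mul_sum ..).symm
      _ ≤ D * M := Nat.mul_le_mul_left _ ((sum_le_sum_of_subset hHB).trans (hM B hB))
  have hlight : ∑ i ∈ Hᶜ, d i ^ 2 ≤ D * M := by
    refine le_of_mul_le_mul_left ?_ hs
    calc s * ∑ i ∈ Hᶜ, d i ^ 2 = ∑ i ∈ Hᶜ, s * d i * d i := by
          rw [mul_sum]; exact sum_congr rfl fun i _ => by ring
      _ ≤ ∑ i ∈ Hᶜ, M * d i := sum_le_sum fun i hi =>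
          Nat.mul_le_mul_right _ (by simpa [H] using hi)
      _ ≤ ∑ i, M * d i := sum_le_sum_of_subset (subset_univ _)
      _ ≤ s * (D * M) := by
          rw [← mul_sum]
          exact (Nat.mul_le_mul_left M hsum).trans_eq (by ring)
  rw [← sum_add_sum_compl H]
  linarith

lemma card_interedges_eq_sum {V : Type*} {G : SimpleGraph V} [DecidableRel G.Adj] (A B : Finset V) :
    #(G.interedges A B) = ∑ v ∈ A, #{u ∈ B | G.Adj v u} := by
  simp only [SimpleGraph.interedges_def, card_filter, sum_product]

lemma card_interedges_singleton_univ {V : Type*} [Fintype V] {G : SimpleGraph V}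
    [DecidableRel G.Adj] (v : V) : #(G.interedges {v} univ) = G.degree v := by
  rw [card_interedges_eq_sum, sum_singleton, ← SimpleGraph.neighborFinset_eq_filter,
    SimpleGraph.degree]

lemma mem_edgeSet_or_exists_forall_adj_of_maximal {V : Type*} {G R : SimpleGraph V} {e : Sym2 V}
    (hR : Maximal (fun R => R ≤ G ∧ R.CliqueFree 3) R) (he : e ∈ G.edgeSet) :
    e ∈ R.edgeSet ∨ ∃ v, ∀ u ∈ e, R.Adj v u := by
  classical
  induction e using Sym2.ind with | _ a b =>
  refine or_iff_not_imp_left.2 fun hab => ?_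
  have hne : a ≠ b := G.ne_of_adj he
  have hle : R ⊔ SimpleGraph.edge a b ≤ G :=
    sup_le hR.prop.1 (SimpleGraph.edge_le_iff _ |>.2 (.inr he))
  obtain ⟨T, hT⟩ : ∃ T, (R ⊔ SimpleGraph.edge a b).IsNClique 3 T := by
    by_contra! h
    exact hR.not_prop_of_gt (R.lt_sup_edge _ _ hne hab) ⟨hle, h⟩
  have haT : a ∈ T := hR.prop.2.mem_of_sup_edge_isNClique hT
  have hbT : b ∈ T := hR.prop.2.mem_of_sup_edge_isNClique (SimpleGraph.edge_comm .. ▸ hT)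
  obtain ⟨v, hvT, hva, hvb⟩ : ∃ v ∈ T, v ≠ a ∧ v ≠ b := by
    have : 0 < #((T.erase a).erase b) := by
      rw [card_erase_of_mem (mem_erase.2 ⟨hne.symm, hbT⟩), card_erase_of_mem haT, hT.card_eq]
      norm_num
    obtain ⟨v, hv⟩ := card_pos.1 this
    simp only [mem_erase] at hv
    exact ⟨v, hv.2.2, hv.2.1, hv.1⟩
  have hadj : ∀ u ∈ T, v ≠ u → R.Adj v u := fun u hu hvu => by
    have := hT.isClique hvT hu hvu
    simpa [SimpleGraph.sup_adj, SimpleGraph.edge_adj, hva, hvb] using this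
  refine ⟨v, fun u hu => ?_⟩
  rcases Sym2.mem_iff.1 hu with rfl | rfl
  exacts [hadj _ haT hva, hadj _ hbT hvb]

variable {V : Type*} [Fintype V] [DecidableEq V] (G : SimpleGraph V) (S : Finset V)

open scoped Classical in
/-- The pairs of distinct vertices of `S` that are neither adjacent in `G` nor joined by a path of
length two. -/
noncomputable def freePairs : Finset (Sym2 V) :=
  {e ∈ S.sym2 | ¬ e.IsDiag ∧ e ∉ G.edgeSet ∧ ¬ ∃ v, ∀ u ∈ e, G.Adj v u}

open scoped Classical in
/-- The pairs of distinct vertices of `S` without a common neighbor outside `S`. In contrast to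
`freePairs G S`, this set does not depend on the edges of `G` inside `S`. -/
noncomputable def uncoveredPairs : Finset (Sym2 V) :=
  {e ∈ S.sym2 | ¬ e.IsDiag ∧ ¬ ∃ v ∉ S, ∀ u ∈ e, G.Adj v u}

variable {G S} {R : SimpleGraph V} {s D M w : ℕ} {e : Sym2 V}

lemma uncoveredPairs_subset_sym2 : uncoveredPairs G S ⊆ S.sym2 := fun e he => by
  simp only [uncoveredPairs, mem_filter] at he
  exact he.1

lemma freePairs_subset_uncoveredPairs : freePairs G S ⊆ uncoveredPairs G S := fun e he => by
  simp only [freePairs, uncoveredPairs, mem_filter] at he ⊢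
  exact ⟨he.1, he.2.1, fun ⟨v, _, hv⟩ => he.2.2.2 ⟨v, hv⟩⟩

lemma freePairs_anti (h : R ≤ G) : freePairs G S ⊆ freePairs R S := fun e he => by
  simp only [freePairs, mem_filter] at he ⊢
  exact ⟨he.1, he.2.1, fun hR => he.2.2.1 (SimpleGraph.edgeSet_mono h hR),
    fun ⟨v, hv⟩ => he.2.2.2 ⟨v, fun u hu => h (hv u hu)⟩⟩

lemma sym2_subset_freePairs_union [DecidableRel G.Adj] (S : Finset V) :
    S.sym2 ⊆
      freePairs G S ∪ S.diag.image Sym2.mk.uncurry ∪ (G.interedges S S).image Sym2.mk.uncurry ∪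
        univ.biUnion fun v => {u ∈ S | G.Adj v u}.sym2 := by
  intro e he
  induction e using Sym2.ind with | _ a b =>
  obtain ⟨ha, hb⟩ := mk_mem_sym2_iff.1 he
  simp only [mem_union]
  by_cases hab : a = b
  · exact .inl (.inl (.inr (mem_image.2 ⟨(a, b), mem_diag.2 ⟨ha, hab⟩, rfl⟩)))
  by_cases hadj : G.Adj a b
  · exact .inl (.inr (mem_image.2 ⟨(a, b), G.mk_mem_interedges_iff.2 ⟨ha, hb, hadj⟩, rfl⟩))
  by_cases hcommon : ∃ v, ∀ u ∈ s(a, b), G.Adj v u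
  · obtain ⟨v, hv⟩ := hcommon
    exact .inr (mem_biUnion.2 ⟨v, mem_univ v, mem_sym2_iff.2 fun u hu =>
      mem_filter.2 ⟨mem_sym2_iff.1 he u hu, hv u hu⟩⟩)
  · refine .inl (.inl (.inl ?_))
    simp only [freePairs, mem_filter]
    exact ⟨he, by simpa using hab, hadj, hcommon⟩

lemma succ_choose_two_le_sq (d : ℕ) : (d + 1).choose 2 ≤ d ^ 2 := by
  rw [Nat.choose_two_right, Nat.add_sub_cancel]
  exact Nat.div_le_of_le_mul (by nlinarith [Nat.le_self_pow two_ne_zero d])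

lemma sq_le_two_mul_card_freePairs [DecidableRel G.Adj] (hs : 0 < s) (hS : #S = s)
    (hD : ∀ v, G.degree v ≤ D) (hM : ∀ B, #B = s → #(G.interedges B S) ≤ M) :
    s ^ 2 ≤ 2 * (#(freePairs G S) + s + M + 2 * D * M) := by
  have hdegree (v : V) : #{u ∈ S | G.Adj v u} ≤ D := by
    refine (card_le_card ?_).trans (hD v)
    rw [SimpleGraph.neighborFinset_eq_filter]
    exact filter_subset_filter _ (subset_univ S)
  have hsum : ∑ v, #{u ∈ S | G.Adj v u} ≤ s * D := by
    rw [sum_card_filter_adj, ← hS, ← smul_eq_mul]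
    exact sum_le_card_nsmul _ _ _ fun u _ => hD u
  have hcovered : #(univ.biUnion fun v => {u ∈ S | G.Adj v u}.sym2) ≤ 2 * D * M :=
    calc _ ≤ ∑ v, #({u ∈ S | G.Adj v u}.sym2) := card_biUnion_le
      _ ≤ ∑ v, #{u ∈ S | G.Adj v u} ^ 2 := sum_le_sum fun v _ => by
          rw [card_sym2]; exact succ_choose_two_le_sq _
      _ ≤ 2 * D * M := sum_sq_le_two_mul_mul hs (hS ▸ card_le_univ S) hdegree hsum fun B hB => by
          rw [← card_interedges_eq_sum]; exact hM B hB
  have hedges : #((G.interedges S S).image Sym2.mk.uncurry) ≤ M := card_image_le.trans (hM S hS)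
  have hsym2 : s ^ 2 ≤ 2 * #S.sym2 := by
    rw [card_sym2, hS, Nat.choose_two_right, Nat.add_sub_cancel,
      Nat.mul_div_cancel' (by rw [mul_comm]; exact (Nat.even_mul_succ_self s).two_dvd)]
    nlinarith
  calc s ^ 2 ≤ 2 * #S.sym2 := hsym2
    _ ≤ 2 * (#(freePairs G S) + s + M + 2 * D * M) := by
        gcongr
        refine (card_le_card (sym2_subset_freePairs_union (G := G) S)).trans ?_
        refine (card_union_le _ _).trans (add_le_add ?_ hcovered)
        refine (card_union_le _ _).trans (add_le_add ?_ hedges)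
        refine (card_union_le _ _).trans_eq ?_
        rw [Sym2.card_image_diag, hS]

lemma not_isIndepSet_of_mem_uncoveredPairs
    (hR : Maximal (fun R => R ≤ G ∧ R.CliqueFree 3) R) (he : e ∈ uncoveredPairs G S)
    (heG : e ∈ G.edgeSet) : ¬ R.IsIndepSet S := fun hS => by
  rw [isIndepSet_iff_forall_not_adj] at hS
  simp only [uncoveredPairs, mem_filter, mem_sym2_iff] at he
  obtain ⟨heS, -, hcommon⟩ := he
  rcases mem_edgeSet_or_exists_forall_adj_of_maximal hR heG with heR | ⟨v, hv⟩
  · induction e using Sym2.ind with | _ a b =>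
    exact hS a (heS a (Sym2.mem_mk_left a b)) b (heS b (Sym2.mem_mk_right a b)) heR
  · by_cases hvS : v ∈ S
    · exact hS v hvS _ (heS _ e.out_fst_mem) (hv _ e.out_fst_mem)
    · exact hcommon ⟨v, hvS, fun u hu => hR.prop.1 (hv u hu)⟩

end FreePairs

section PseudorandomGraphs

lemma card_powersetCard_univ_le {V : Type*} [Fintype V] {s l : ℕ}
    (hl : Fintype.card V ≤ 2 ^ l) :
    #(powersetCard s (univ : Finset V)) ≤ 2 ^ (s * l) := by
  rw [card_powersetCard, card_univ, mul_comm, pow_mul]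
  exact (Nat.choose_le_pow _ _).trans (Nat.pow_le_pow_left hl s)

lemma card_le_two_mul_card_image_sym2Mk {V : Type*} [DecidableEq V] (P : Finset (V × V)) :
    #P ≤ 2 * #(P.image Sym2.mk.uncurry) := by
  refine card_le_mul_card_image P 2 fun e _ => ?_
  induction e using Sym2.ind with | _ a b =>
  calc #{p ∈ P | Sym2.mk.uncurry p = s(a, b)} ≤ #{(a, b), (b, a)} := by
        refine card_le_card fun p hp => ?_
        simpa [Function.uncurry, Prod.ext_iff] using (mem_filter.1 hp).2
    _ ≤ 2 := card_le_two

/-- The graph whose edges are the pairs of distinct vertices to which `f` assigns the color `j`. -/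
abbrev colorGraph {V K : Type*} (f : Sym2 V → K) (j : K) : SimpleGraph V :=
  SimpleGraph.fromEdgeSet {e | f e = j}

variable {V K : Type*} [DecidableEq V]

lemma card_interedges_colorGraph_le [DecidableEq K] (f : Sym2 V → K) (j : K) (A B : Finset V) :
    #((colorGraph f j).interedges A B) ≤
      2 * #{e ∈ (A ×ˢ B).image Sym2.mk.uncurry | f e = j} := by
  refine (card_le_two_mul_card_image_sym2Mk _).trans ?_
  gcongr
  intro e he
  obtain ⟨⟨a, b⟩, hab, rfl⟩ := mem_image.1 he
  rw [SimpleGraph.mk_mem_interedges_iff, SimpleGraph.fromEdgeSet_adj] at hab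
  exact mem_filter.2 ⟨mem_image_of_mem _ (mem_product.2 ⟨hab.1, hab.2.1⟩), hab.2.2.1⟩

variable [Fintype V]

lemma uncoveredPairs_colorGraph_piecewise (f h : Sym2 V → K) (j : K) (S : Finset V) :
    uncoveredPairs (colorGraph (S.sym2.piecewise h f) j) S = uncoveredPairs (colorGraph f j) S := by
  have hadj (v : V) (hv : v ∉ S) (u : V) :
      (colorGraph (S.sym2.piecewise h f) j).Adj v u ↔ (colorGraph f j).Adj v u := by
    simp [hv]
  ext e
  simp only [uncoveredPairs, mem_filter]
  refine and_congr_right fun _ => and_congr_right fun _ => not_congr <| exists_congr fun v =>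
    and_congr_right fun hv => forall₂_congr fun u _ => hadj v hv u

/-- The properties of the random graph that the coloring needs: its degrees are at most `D`, there
are at most `M` edges between any two `s`-sets, and if an `s`-set contains at least `w` pairs
without a common neighbor outside of it, then one of these pairs is an edge. -/
structure IsPseudorandom (G : SimpleGraph V) [DecidableRel G.Adj] (s D M w : ℕ) : Prop where
  degree_le (v : V) : G.degree v ≤ D
  card_interedges_le {A B : Finset V} (hA : #A = s) (hB : #B = s) : #(G.interedges A B) ≤ M
  exists_mem_edgeSet {S : Finset V} (hS : #S = s) (hw : w ≤ #(uncoveredPairs G S)) :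
    ∃ e ∈ uncoveredPairs G S, e ∈ G.edgeSet

lemma IsPseudorandom.mono {G : SimpleGraph V} [DecidableRel G.Adj] {s D D' M M' w : ℕ}
    (hG : IsPseudorandom G s D M w) (hD : D ≤ D') (hM : M ≤ M') : IsPseudorandom G s D' M' w where
  degree_le v := (hG.degree_le v).trans hD
  card_interedges_le hA hB := (hG.card_interedges_le hA hB).trans hM
  exists_mem_edgeSet := hG.exists_mem_edgeSet

lemma isPseudorandom_colorGraph [DecidableEq K] {f : Sym2 V → K} {j : K} {s D M w : ℕ}
    (hD : ∀ v, #((colorGraph f j).interedges {v} univ) ≤ D)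
    (hM : ∀ A B, #A = s → #B = s → #((colorGraph f j).interedges A B) ≤ M)
    (hw : ∀ S, #S = s → w ≤ #(uncoveredPairs (colorGraph f j) S) →
      ∃ e ∈ uncoveredPairs (colorGraph f j) S, f e = j) :
    IsPseudorandom (colorGraph f j) s D M w where
  degree_le v := (card_interedges_singleton_univ v).symm.trans_le (hD v)
  card_interedges_le := hM _ _
  exists_mem_edgeSet {S} hS hwS := by
    obtain ⟨e, he, hfe⟩ := hw S hS hwS
    refine ⟨e, he, ?_⟩
    simp only [uncoveredPairs, mem_filter] at he
    simpa using ⟨hfe, he.2.1⟩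

variable [Fintype K]

lemma dens_lt_card_interedges_colorGraph_le [DecidableEq K] {A B : Finset V} {a b : ℕ} (j : K)
    (hAB : #A * #B ≤ Fintype.card K * a) :
    ({f | 2 * (2 * a + b) < #((colorGraph f j).interedges A B)} : Finset (Sym2 V → K)).dens ≤
      (1 / 2) ^ b := by
  refine (dens_mono fun f hf => ?_).trans (dens_le_card_filter_le (a := a) j
    (T := (A ×ˢ B).image Sym2.mk.uncurry) (card_image_le.trans ((card_product A B).trans_le hAB)))
  rw [mem_filter_univ] at hf ⊢
  have := card_interedges_colorGraph_le f j A B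
  lia

lemma dens_forall_mem_uncoveredPairs_ne_le [DecidableEq K] (j : K) (S : Finset V) (w : ℕ) :
    ({f | Fintype.card K * w ≤ #(uncoveredPairs (colorGraph f j) S) ∧
      ∀ e ∈ uncoveredPairs (colorGraph f j) S, f e ≠ j} : Finset (Sym2 V → K)).dens ≤
      (1 / 2) ^ w :=
  dens_forall_mem_ne_of_piecewise_eq_le (U := fun f => uncoveredPairs (colorGraph f j) S) j
    (fun _ => uncoveredPairs_subset_sym2) fun f h => uncoveredPairs_colorGraph_piecewise f h j S

theorem exists_isPseudorandom {a₁ a₂ l s : ℕ} (j : K) (hV : Fintype.card V ≤ Fintype.card K * a₁)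
    (hs : s * s ≤ Fintype.card K * a₂) (hl : Fintype.card V ≤ 2 ^ l) :
    ∃ (G : SimpleGraph V) (_ : DecidableRel G.Adj),
      IsPseudorandom G s (2 * (2 * a₁ + (l + 2))) (2 * (2 * a₂ + (s * l + s * l + 2)))
        (Fintype.card K * (s * l + 2)) := by
  classical
  have : Nonempty K := ⟨j⟩
  set I := powersetCard s (univ : Finset V)
  have hI : #I ≤ 2 ^ (s * l) := card_powersetCard_univ_le hl
  set B₁ : Finset (Sym2 V → K) := univ.biUnion fun v : V =>
    {f | 2 * (2 * a₁ + (l + 2)) < #((colorGraph f j).interedges {v} univ)}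
  set B₂ : Finset (Sym2 V → K) := (I ×ˢ I).biUnion fun P =>
    {f | 2 * (2 * a₂ + (s * l + s * l + 2)) < #((colorGraph f j).interedges P.1 P.2)}
  set B₃ : Finset (Sym2 V → K) := I.biUnion fun S =>
    {f | Fintype.card K * (s * l + 2) ≤ #(uncoveredPairs (colorGraph f j) S) ∧
      ∀ e ∈ uncoveredPairs (colorGraph f j) S, f e ≠ j}
  have hB₁ : B₁.dens ≤ (1 / 2) ^ 2 :=
    dens_biUnion_le_half_pow (card_univ.trans_le hl) fun v _ =>
      dens_lt_card_interedges_colorGraph_le j (by simpa using hV)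
  have hB₂ : B₂.dens ≤ (1 / 2) ^ 2 := by
    refine dens_biUnion_le_half_pow (a := s * l + s * l) ?_ fun P hP => ?_
    · rw [card_product, pow_add]
      exact Nat.mul_le_mul hI hI
    · obtain ⟨hA, hB⟩ := mem_product.1 hP
      refine dens_lt_card_interedges_colorGraph_le j ?_
      rwa [mem_powersetCard_univ.1 hA, mem_powersetCard_univ.1 hB]
  have hB₃ : B₃.dens ≤ (1 / 2) ^ 2 :=
    dens_biUnion_le_half_pow hI fun S _ => dens_forall_mem_uncoveredPairs_ne_le j S _
  obtain ⟨f, hf⟩ : ∃ f, f ∉ B₁ ∪ B₂ ∪ B₃ := exists_notMem_of_dens_lt_one <|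
    calc (B₁ ∪ B₂ ∪ B₃).dens ≤ B₁.dens + B₂.dens + B₃.dens :=
          (dens_union_le _ _).trans (add_le_add_left (dens_union_le _ _) _)
      _ ≤ (1 / 2) ^ 2 + (1 / 2) ^ 2 + (1 / 2) ^ 2 := by gcongr
      _ < 1 := by norm_num
  simp only [mem_union, not_or, B₁, B₂, B₃, mem_biUnion, not_exists, not_and, mem_filter_univ,
    not_lt, not_forall, not_not, mem_powersetCard_univ, I, mem_product] at hf
  obtain ⟨⟨hdeg, hinter⟩, huncov⟩ := hf
  exact ⟨colorGraph f j, inferInstance, isPseudorandom_colorGraph (fun v => hdeg v (mem_univ v))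
    (fun A B hA hB => hinter (A, B) ⟨hA, hB⟩) (by simpa only [exists_prop] using huncov)⟩

end PseudorandomGraphs

lemma exists_maximal_le_cliqueFree {V : Type*} [Finite V] (G : SimpleGraph V) {n : ℕ}
    (hn : 2 ≤ n) : ∃ R, Maximal (fun R => R ≤ G ∧ R.CliqueFree n) R :=
  (Set.toFinite {R | R ≤ G ∧ R.CliqueFree n}).exists_maximal
    ⟨⊥, bot_le, SimpleGraph.cliqueFree_bot hn⟩

namespace Coloring

variable {n : ℕ} {R : SimpleGraph (Fin n)} {f : Sym2 (Fin n) → Bool} {s : ℕ}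

open scoped Classical in
/-- The coloring with red graph `R` in which a non-adjacent pair with a common neighbor is yellow,
and any other pair is blue or yellow as `f` prescribes. For triangle-free `R` it avoids `rrr` and
`rrb`. -/
noncomputable def ofGraph (R : SimpleGraph (Fin n)) (f : Sym2 (Fin n) → Bool) : Coloring n where
  col a b := if s(a, b) ∈ R.edgeSet then Col.r
    else if (∃ v, ∀ u ∈ s(a, b), R.Adj v u) then Col.y
    else if f s(a, b) then Col.b else Col.y
  symm a b := by simp only [Sym2.eq_swap]

lemma ofGraph_col_eq_r_iff {a b : Fin n} : (ofGraph R f).col a b = Col.r ↔ R.Adj a b := by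
  rw [← SimpleGraph.mem_edgeSet]
  simp only [ofGraph]
  split_ifs with h <;> simp [h]

lemma ofGraph_col_eq_y {v a b : Fin n} (hva : R.Adj v a) (hvb : R.Adj v b) (hab : ¬ R.Adj a b) :
    (ofGraph R f).col a b = Col.y := by
  have hv : ∃ v, ∀ u ∈ s(a, b), R.Adj v u := ⟨v, by simp [hva, hvb]⟩
  simp only [ofGraph]
  rw [if_neg (by rwa [SimpleGraph.mem_edgeSet]), if_pos hv]

lemma ofGraph_col_of_mem_freePairs {S : Finset (Fin n)} {a b : Fin n}
    (h : s(a, b) ∈ freePairs R S) :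
    (ofGraph R f).col a b = if f s(a, b) then Col.b else Col.y := by
  simp only [freePairs, mem_filter] at h
  simp only [ofGraph]
  rw [if_neg h.2.2.1, if_neg h.2.2.2]

lemma avoids_ofGraph (hR : R.CliqueFree 3) : Avoids (ofGraph R f) {Prrr, Prrb} := by
  refine avoids_rrr_rrb_iff.2 fun v u w _ _ _ hu hw => ?_
  rw [ofGraph_col_eq_r_iff] at hu hw
  exact ofGraph_col_eq_y hu hw fun huw =>
    hR {v, u, w} (SimpleGraph.is3Clique_triple_iff.2 ⟨hu, hw, huw⟩)

lemma isIndepSet_or_of_twoColored_ofGraph {S : Finset (Fin n)} (hS : TwoColored (ofGraph R f) S) :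
    R.IsIndepSet S ∨ ∃ i, ∀ e ∈ freePairs R S, f e ≠ i := by
  obtain ⟨x, hx⟩ := hS
  have hfree (i : Bool) (hi : (if i then Col.b else Col.y) = x) :
      ∀ e ∈ freePairs R S, f e ≠ i := fun e he hfe => by
    induction e using Sym2.ind with | _ a b =>
    have hab := he
    simp only [freePairs, mem_filter, mk_mem_sym2_iff, Sym2.mk_isDiag_iff] at hab
    refine hx a hab.1.1 b hab.1.2 hab.2.1 ?_
    rw [ofGraph_col_of_mem_freePairs he, hfe, hi]
  cases x with
  | r => exact .inl fun a ha b hb hab hadj => hx a ha b hb hab (ofGraph_col_eq_r_iff.2 hadj)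
  | b => exact .inr ⟨true, hfree true rfl⟩
  | y => exact .inr ⟨false, hfree false rfl⟩

lemma h2_ofGraph_le (hR : ∀ S : Finset (Fin n), #S = s → ¬ R.IsIndepSet S)
    (hf : ∀ S : Finset (Fin n), #S = s → ∀ i, ∃ e ∈ freePairs R S, f e = i) :
    h2 (ofGraph R f) ≤ s := by
  refine h2_le_iff.2 fun S hS => ?_
  by_contra! hsS
  obtain ⟨T, hTS, hT⟩ := exists_subset_card_eq hsS.le
  have hTtwo : TwoColored (ofGraph R f) T :=
    hS.imp fun x hx i hi j hj => hx i (hTS hi) j (hTS hj)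
  rcases isIndepSet_or_of_twoColored_ofGraph hTtwo with hind | ⟨i, hi⟩
  · exact hR T hT hind
  · obtain ⟨e, he, hfe⟩ := hf T hT i
    exact hi e he hfe

end Coloring

section UpperBound

open Real

variable {n : ℕ}

theorem IsPseudorandom.h2n_le {G : SimpleGraph (Fin n)} [DecidableRel G.Adj] {s D M w l : ℕ}
    (hG : IsPseudorandom G s D M w) (hs : 0 < s) (hl : n ≤ 2 ^ l) (hlw : 2 * (s * l + 2) ≤ w)
    (hw : 2 * (w + s + M + 2 * D * M) ≤ s ^ 2) : h2n n {Prrr, Prrb} ≤ s := by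
  obtain ⟨R, hR⟩ := exists_maximal_le_cliqueFree G (n := 3) (by norm_num)
  have hfree {S : Finset (Fin n)} (hS : #S = s) : w ≤ #(freePairs G S) := by
    have := sq_le_two_mul_card_freePairs hs hS hG.degree_le fun B hB =>
      hG.card_interedges_le hB hS
    lia
  obtain ⟨f, hf⟩ := exists_bool_forall_exists_mem_eq (I := powersetCard s univ)
    (F := freePairs R) (card_powersetCard_univ_le ((Fintype.card_fin n).trans_le hl)) fun S hS =>
      (hlw.trans (hfree (mem_powersetCard_univ.1 hS))).trans
        (card_le_card (freePairs_anti hR.prop.1))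
  have hindep (S : Finset (Fin n)) (hS : #S = s) : ¬ R.IsIndepSet S := by
    obtain ⟨e, he, heG⟩ := hG.exists_mem_edgeSet hS
      ((hfree hS).trans (card_le_card freePairs_subset_uncoveredPairs))
    exact not_isIndepSet_of_mem_uncoveredPairs hR he heG
  exact (Coloring.h2n_le_h2 (Coloring.avoids_ofGraph hR.prop.2)).trans
    (Coloring.h2_ofGraph_le hindep fun S hS => hf S (mem_powersetCard_univ.2 hS))

theorem h2n_le_mul_mul {r l : ℕ} (hr : n ≤ r * r) (hl : n ≤ 2 ^ l) (hl₀ : 0 < l)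
    (hlr : l + 2 ≤ r) : h2n n {Prrr, Prrb} ≤ 2048 * r * l := by
  set s := 2048 * r * l with hs
  have hr₀ : 0 < r := by lia
  have hs₀ : 0 < s := by positivity
  have hsl : 512 ≤ s * l := by nlinarith [Nat.mul_pos hr₀ hl₀]
  have : NeZero (256 * r) := ⟨by lia⟩
  obtain ⟨G, _, hG⟩ := exists_isPseudorandom (V := Fin n) (K := Fin (256 * r)) (a₁ := r)
    (a₂ := 8 * l * s) (l := l) (s := s) 0 (by simp only [Fintype.card_fin]; lia)
    (by rw [Fintype.card_fin, hs]; exact le_of_eq (by ring)) (by rwa [Fintype.card_fin])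
  rw [Fintype.card_fin] at hG
  have hD : 2 * (2 * r + (l + 2)) ≤ 6 * r := by lia
  have hM : 2 * (2 * (8 * l * s) + (s * l + s * l + 2)) ≤ 40 * (s * l) := by linarith
  refine (hG.mono hD hM).h2n_le hs₀ hl (Nat.mul_le_mul_right _ (by lia)) ?_
  have hr_le : r * 512 ≤ r * (s * l) := Nat.mul_le_mul_left r hsl
  have hs_le : s * 1 ≤ s * l := Nat.mul_le_mul_left s hl₀
  have hsl_le : 1 * (s * l) ≤ r * (s * l) := Nat.mul_le_mul_right _ hr₀
  calc 2 * (256 * r * (s * l + 2) + s + 40 * (s * l) + 2 * (6 * r) * (40 * (s * l)))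
      ≤ 2048 * r * l * s := by linarith
    _ = s ^ 2 := by rw [sq, ← hs]

lemma add_two_mul_add_two_le_two_pow_pred {l : ℕ} (hl : 8 ≤ l) :
    (l + 2) * (l + 2) ≤ 2 ^ (l - 1) := by
  induction l, hl using Nat.le_induction with
  | base => norm_num
  | succ k hk ih =>
    rw [show k + 1 - 1 = k - 1 + 1 by lia, pow_succ']
    nlinarith

theorem h2n_le_mul_clog (hn : 256 ≤ n) :
    h2n n {Prrr, Prrb} ≤ 2048 * (n.sqrt + 1) * Nat.clog 2 n := by
  have hn_sqrt : n ≤ (n.sqrt + 1) * (n.sqrt + 1) := (Nat.lt_succ_sqrt n).le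
  have hclog : 8 ≤ Nat.clog 2 n := (Nat.lt_clog_iff_pow_lt one_lt_two).2 (by lia)
  refine h2n_le_mul_mul hn_sqrt (Nat.le_pow_clog one_lt_two n) (by lia) ?_
  refine Nat.mul_self_le_mul_self_iff.1 ?_
  calc (Nat.clog 2 n + 2) * (Nat.clog 2 n + 2) ≤ 2 ^ (Nat.clog 2 n - 1) :=
        add_two_mul_add_two_le_two_pow_pred hclog
    _ ≤ n := (Nat.pow_pred_clog_lt_self one_lt_two (by lia)).le
    _ ≤ (n.sqrt + 1) * (n.sqrt + 1) := hn_sqrt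

theorem h2n_le_sqrt_mul_logb (hn : 256 ≤ n) :
    (h2n n {Prrr, Prrb} : ℝ) ≤ 8192 * √n * logb 2 n := by
  have hL := eight_le_logb hn
  have hsqrt : (n.sqrt : ℝ) + 1 ≤ 2 * √n := by
    have h₁ : 1 ≤ √n := one_le_sqrt.2 (by exact_mod_cast one_le_two.trans (by lia : 2 ≤ n))
    have := nat_sqrt_le_real_sqrt (a := n)
    linarith
  have hclog : (Nat.clog 2 n : ℝ) ≤ 2 * logb 2 n := by
    have := Nat.ceil_lt_add_one (by linarith : 0 ≤ logb 2 n)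
    rw [← Nat.cast_ofNat, natCeil_logb_natCast, Nat.cast_ofNat] at this
    linarith
  calc (h2n n {Prrr, Prrb} : ℝ) ≤ 2048 * (n.sqrt + 1) * Nat.clog 2 n := by
        exact_mod_cast h2n_le_mul_clog hn
    _ ≤ 2048 * (2 * √n) * (2 * logb 2 n) := by gcongr
    _ = 8192 * √n * logb 2 n := by ring

end UpperBound

theorem stmt6_general {n : ℕ} (hn : 256 ≤ n) :
    1 / 64 * √(n * Real.logb 2 n) ≤ (h2n n {Prrr, Prrb} : ℝ) ∧
      (h2n n {Prrr, Prrb} : ℝ) ≤ 8192 * √n * Real.logb 2 n :=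
  ⟨sqrt_mul_logb_le_h2n hn, h2n_le_sqrt_mul_logb hn⟩

theorem stmt6 :
    ∃ C1 C2 : ℝ, 0 < C1 ∧ 0 < C2 ∧ ∃ n0 : ℕ, ∀ n : ℕ, n0 ≤ n →
      C1 * Real.sqrt (n * Real.logb 2 n) ≤ (h2n n {Prrr, Prrb} : ℝ) ∧
      (h2n n {Prrr, Prrb} : ℝ) ≤ C2 * Real.sqrt n * Real.logb 2 n ^ ((3 : ℝ) / 2) :=
  ⟨1 / 64, 8192, by norm_num, by norm_num, 256, fun n hn => (stmt6_general hn).imp_right fun h =>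
    h.trans <| by
      gcongr
      exact Real.self_le_rpow_of_one_le (by linarith [eight_le_logb hn]) (by norm_num)⟩
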